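/- There exist a constant C > 0 and b₀ such that for all integers b ≥ b₀ and uniformly over all points o ∈ ℝ₊² with D_δ(o) ⊆ ℝ₊², the variance of τ_b satisfies Var(τ_b) ≤ C·b^{1/3}/(log b)⁶. -/

import Mathlib

open MeasureTheory Real Set
open scoped ENNReal

noncomputable section

/-- The Euclidean plane ℝ². -/
abbrev Plane := EuclideanSpace ℝ (Fin 2)

/-- The point in the plane with Cartesian coordinates `(x, y)`. -/
def pt (x y : ℝ) : Plane := (WithLp.equiv 2 (Fin 2 → ℝ)).symm ![x, y]

/-- `D p r` is the closed disk of radius `r` centered at `p`. -/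
def D (p : Plane) (r : ℝ) : Set Plane := Metric.closedBall p r

/-- `X o q u` is the area of `D₁(o) \ (D₁(q) ∪ D₁(u))` (Lebesgue measure). -/
def X (o q u : Plane) : ℝ := (volume (D o 1 \ (D q 1 ∪ D u 1))).toReal

/-- `L = ⌊b^(1/3) (log b)²⌋`. -/
def L (b : ℝ) : ℕ := ⌊b ^ (1/3 : ℝ) * (Real.log b) ^ 2⌋₊

/-- `δ = 1/(b^(1/3) log b)`. -/
def δ (b : ℝ) : ℝ := 1 / (b ^ (1/3 : ℝ) * Real.log b)

/-- `θb = π / L`. -/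
def θb (b : ℝ) : ℝ := Real.pi / L b

/-- The point with polar coordinates `(r, θ)` relative to `o`. -/
def polarPt (o : Plane) (r θ : ℝ) : Plane := o + r • pt (Real.cos θ) (Real.sin θ)

/-- The sector `Q_i` of the disk `D_δ(o)`: points with polar coordinates `(r, θ)` relative
to `o` satisfying `0 < r ≤ δ` and `(i - 1/2)θ_b ≤ θ ≤ (i + 1/2)θ_b`. -/
def Qsector (o : Plane) (b : ℝ) (i : ℕ) : Set Plane :=
  {p | ∃ r θ : ℝ, 0 < r ∧ r ≤ δ b ∧
    ((i : ℝ) - 1/2) * θb b ≤ θ ∧ θ ≤ ((i : ℝ) + 1/2) * θb b ∧ p = polarPt o r θ}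

/-- The sector `R_i`, the reflection of `Q_i` through `o`: points with polar coordinates
`(r, θ)` relative to `o` satisfying `0 < r ≤ δ` and `(i - 1/2)θ_b ≤ θ - π ≤ (i + 1/2)θ_b`. -/
def Rsector (o : Plane) (b : ℝ) (i : ℕ) : Set Plane :=
  {p | ∃ r θ : ℝ, 0 < r ∧ r ≤ δ b ∧
    ((i : ℝ) - 1/2) * θb b ≤ θ - Real.pi ∧ θ - Real.pi ≤ ((i : ℝ) + 1/2) * θb b ∧
    p = polarPt o r θ}

/-- The extreme point `q̃_i`, with polar coordinates `(δ, (i - 1/2)θ_b)` relative to `o`. -/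
def qtil (o : Plane) (b : ℝ) (i : ℕ) : Plane := polarPt o (δ b) (((i : ℝ) - 1/2) * θb b)

/-- The extreme point `ũ_i`, with polar coordinates `(δ, (i + 1/2)θ_b + π)` relative to `o`. -/
def util (o : Plane) (b : ℝ) (i : ℕ) : Plane :=
  polarPt o (δ b) (((i : ℝ) + 1/2) * θb b + Real.pi)

/-- The closed positive quadrant `ℝ₊²`. -/
def quad : Set Plane := {p | 0 ≤ p 0 ∧ 0 ≤ p 1}

/-- The truncated unit disk `D̂₁(o) = D₁(o) ∩ ℝ₊²`. -/
def Dhat (o : Plane) : Set Plane := D o 1 ∩ quad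

/-- `λ̂(o) = π / |D̂₁(o)|`. -/
def lamHat (o : Plane) : ℝ := Real.pi / (volume (Dhat o)).toReal

/-- The uniform probability measure on a set `S` (normalized restricted Lebesgue measure). -/
def unif (S : Set Plane) : Measure Plane := (volume S)⁻¹ • volume.restrict S

/-- The joint law of `b` points chosen independently and uniformly at random from `D̂₁(o)`. -/
def ptsMeasure (o : Plane) (b : ℕ) : Measure (Fin b → Plane) :=
  Measure.pi fun _ => unif (Dhat o)

/-- The number of the points `ω 0, …, ω (b-1)` that lie in the set `S`. -/
def countIn {b : ℕ} (S : Set Plane) (ω : Fin b → Plane) : ℕ :=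
  Set.ncard {j : Fin b | ω j ∈ S}

open scoped Classical in
/-- `τ_b = Σ_{i=0}^{L-1} 1[N(Q_i) = 1 ∧ N(R_i) = 1]`. -/
def tau (o : Plane) (b : ℕ) (ω : Fin b → Plane) : ℕ :=
  ∑ i ∈ Finset.range (L b),
    if countIn (Qsector o b i) ω = 1 ∧ countIn (Rsector o b i) ω = 1 then 1 else 0

/-!
For disjoint cells of probability at most `1 / (4 b)`, the events that `m` given cells, respectively
`n` further cells, contain exactly one of the `b` points each are nonpositively correlated. With
total cell probabilities `s` and `t`, replacing `(1 - s)^(b - m) (1 - t)^(b - n)` by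
`(1 - s - t)^(b - m - n)` gains at most a factor `exp (2 s n + 2 t m) ≤ exp (m n / b)`, while the
number of ways to choose the points loses at least that factor when passing from the product
`b_(m) b_(n)` of falling factorials to `b_(m + n)`. Hence the variance of `τ_b` is at most its mean,
and the mean is at most `L (b q)²`, where the bound `q = O(δ² / L)` for the probability of a cell
holds since the area of `D̂₁(o)` is bounded below. The sectors `Q_i` and `R_i` overlap in rays only;
these are null, so half-open sectors may be used instead.
-/

section SumOfIndicators

open scoped ProbabilityTheory

variable {Ω ι : Type*} [MeasurableSpace Ω] {P : Measure Ω} [IsProbabilityMeasure P]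

lemma covariance_indicator_one {A B : Set Ω} (hA : MeasurableSet A) (hB : MeasurableSet B) :
    cov[A.indicator (1 : Ω → ℝ), B.indicator 1; P] = P.real (A ∩ B) - P.real A * P.real B := by
  have hL : ∀ {C : Set Ω}, MeasurableSet C → MemLp (C.indicator (1 : Ω → ℝ)) 2 P := fun hC =>
    memLp_indicator_const 2 hC 1 (Or.inr (measure_ne_top _ _))
  rw [ProbabilityTheory.covariance_eq_sub (hL hA) (hL hB), ← inter_indicator_one,
    integral_indicator_one (hA.inter hB), integral_indicator_one hA, integral_indicator_one hB]

lemma variance_sum_indicator_one_le [Fintype ι] {A : ι → Set Ω} (hA : ∀ i, MeasurableSet (A i))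
    (hcorr : Pairwise fun i j => P.real (A i ∩ A j) ≤ P.real (A i) * P.real (A j)) :
    Var[fun ω => ∑ i, (A i).indicator (1 : Ω → ℝ) ω; P] ≤ ∑ i, P.real (A i) := by
  classical
  have hL : ∀ i, MemLp ((A i).indicator (1 : Ω → ℝ)) 2 P := fun i =>
    memLp_indicator_const 2 (hA i) 1 (Or.inr (measure_ne_top _ _))
  rw [ProbabilityTheory.variance_fun_sum hL]
  refine Finset.sum_le_sum fun i _ => ?_
  have hoff : ∀ j ∈ Finset.univ.erase i,
      cov[(A i).indicator (1 : Ω → ℝ), (A j).indicator 1; P] ≤ 0 := fun j hj => by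
    rw [covariance_indicator_one (hA i) (hA j), sub_nonpos]
    exact hcorr (Finset.ne_of_mem_erase hj).symm
  rw [← Finset.add_sum_erase _ _ (Finset.mem_univ i), covariance_indicator_one (hA i) (hA i),
    inter_self]
  linarith [Finset.sum_nonpos hoff, mul_self_nonneg (P.real (A i))]

end SumOfIndicators

section FallingFactorials

lemma descFactorial_mul_pow_le {a b : ℕ} (hab : a ≤ b) (n : ℕ) :
    a.descFactorial n * b ^ n ≤ b.descFactorial n * a ^ n := by
  induction n with
  | zero => simp
  | succ n ih =>
    have hfactor : (a - n) * b ≤ (b - n) * a := by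
      rw [Nat.sub_mul, Nat.sub_mul, mul_comm b a]
      exact Nat.sub_le_sub_left (Nat.mul_le_mul_left n hab) _
    calc a.descFactorial (n + 1) * b ^ (n + 1)
        = (a - n) * b * (a.descFactorial n * b ^ n) := by rw [Nat.descFactorial_succ]; ring
      _ ≤ (b - n) * a * (b.descFactorial n * a ^ n) := Nat.mul_le_mul hfactor ih
      _ = b.descFactorial (n + 1) * a ^ (n + 1) := by rw [Nat.descFactorial_succ]; ring

lemma descFactorial_add_le {b m : ℕ} (hm : m ≤ b) (n : ℕ) :
    (b.descFactorial (m + n) : ℝ) ≤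
      b.descFactorial m * b.descFactorial n * exp (-(m * n / b)) := by
  rcases Nat.eq_zero_or_pos b with rfl | hb
  · obtain rfl := Nat.le_zero.1 hm
    simp
  have hb' : (0 : ℝ) < b := by exact_mod_cast hb
  have hratio : ((b - m).descFactorial n : ℝ) * b ^ n ≤ b.descFactorial n * (b - m : ℝ) ^ n := by
    rw [← Nat.cast_sub hm]
    exact_mod_cast descFactorial_mul_pow_le (Nat.sub_le b m) n
  have hone_sub : 0 ≤ 1 - (m : ℝ) / b := by
    rw [sub_nonneg, div_le_one hb']
    exact_mod_cast hm
  have htail : ((b - m).descFactorial n : ℝ) ≤ b.descFactorial n * exp (-(m * n / b)) :=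
    calc ((b - m).descFactorial n : ℝ) ≤ b.descFactorial n * (1 - m / b) ^ n := by
          rwa [one_sub_div hb'.ne', div_pow, mul_div_assoc', le_div_iff₀ (by positivity)]
      _ ≤ b.descFactorial n * exp (-(m / b)) ^ n := by
          gcongr
          exact one_sub_le_exp_neg _
      _ = b.descFactorial n * exp (-(m * n / b)) := by rw [← exp_nat_mul]; ring_nf
  calc (b.descFactorial (m + n) : ℝ) = b.descFactorial m * (b - m).descFactorial n := by
        rw [← Nat.descFactorial_mul_descFactorial (Nat.le_add_right m n), Nat.add_sub_cancel_left]
        push_cast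
        ring
    _ ≤ b.descFactorial m * (b.descFactorial n * exp (-(m * n / b))) := by gcongr
    _ = _ := by ring

lemma exp_neg_two_mul_le_one_sub {x : ℝ} (hx₀ : 0 ≤ x) (hx : x ≤ 1 / 2) :
    exp (-(2 * x)) ≤ 1 - x := by
  rw [exp_neg, inv_le_comm₀ (exp_pos _) (by linarith)]
  calc (1 - x)⁻¹ ≤ 2 * x + 1 := by
        rw [inv_le_iff_one_le_mul₀ (by linarith)]
        nlinarith
    _ ≤ exp (2 * x) := add_one_le_exp _

lemma exp_neg_div_le_one_sub_pow_mul {b m n : ℕ} (hm : m ≤ b) (hn : n ≤ b) {s t : ℝ}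
    (hs₀ : 0 ≤ s) (ht₀ : 0 ≤ t) (hs : 4 * b * s ≤ m) (ht : 4 * b * t ≤ n) :
    exp (-(m * n / b)) ≤ (1 - s) ^ n * (1 - t) ^ m := by
  rcases Nat.eq_zero_or_pos b with rfl | hb
  · obtain ⟨rfl, rfl⟩ := And.intro (Nat.le_zero.1 hm) (Nat.le_zero.1 hn)
    simp
  have hb' : (0 : ℝ) < b := by exact_mod_cast hb
  have hm' : (m : ℝ) ≤ b := by exact_mod_cast hm
  have hn' : (n : ℝ) ≤ b := by exact_mod_cast hn
  have hs' : s ≤ 1 / 2 := by nlinarith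
  have ht' : t ≤ 1 / 2 := by nlinarith
  have hexponent : 2 * s * n + 2 * t * m ≤ m * n / b := by
    rw [le_div_iff₀ hb']
    linarith [mul_le_mul_of_nonneg_right hs n.cast_nonneg,
      mul_le_mul_of_nonneg_right ht m.cast_nonneg]
  calc exp (-(m * n / b)) ≤ exp (-(2 * s * n + 2 * t * m)) := by gcongr
    _ = exp (-(2 * s)) ^ n * exp (-(2 * t)) ^ m := by
        rw [← exp_nat_mul, ← exp_nat_mul, ← exp_add]
        ring_nf
    _ ≤ (1 - s) ^ n * (1 - t) ^ m := by
        gcongr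
        · exact pow_nonneg (by linarith) n
        · exact exp_neg_two_mul_le_one_sub hs₀ hs'
        · exact exp_neg_two_mul_le_one_sub ht₀ ht'

lemma descFactorial_add_mul_one_sub_pow_le {b m n : ℕ} (hmn : m + n ≤ b) {s t : ℝ}
    (hs₀ : 0 ≤ s) (ht₀ : 0 ≤ t) (hst : s + t ≤ 1) (hs : 4 * b * s ≤ m) (ht : 4 * b * t ≤ n) :
    b.descFactorial (m + n) * (1 - (s + t)) ^ (b - (m + n)) ≤
      b.descFactorial m * (1 - s) ^ (b - m) * (b.descFactorial n * (1 - t) ^ (b - n)) := by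
  obtain ⟨r, rfl⟩ := Nat.exists_eq_add_of_le hmn
  rw [Nat.add_sub_cancel_left, show m + n + r - m = n + r by lia,
    show m + n + r - n = m + r by lia]
  set b := m + n + r
  have hrest : (1 - (s + t)) ^ r ≤ ((1 - s) * (1 - t)) ^ r :=
    pow_le_pow_left₀ (by linarith) (by nlinarith) r
  have hrest₀ : 0 ≤ ((1 - s) * (1 - t)) ^ r :=
    pow_nonneg (mul_nonneg (by linarith) (by linarith)) r
  calc (b.descFactorial (m + n) : ℝ) * (1 - (s + t)) ^ r
      ≤ b.descFactorial m * b.descFactorial n * exp (-(m * n / b)) * ((1 - s) * (1 - t)) ^ r :=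
        mul_le_mul (descFactorial_add_le (by lia) n) hrest (pow_nonneg (by linarith) r)
          (by positivity)
    _ ≤ b.descFactorial m * b.descFactorial n * ((1 - s) ^ n * (1 - t) ^ m) *
          ((1 - s) * (1 - t)) ^ r := by
        gcongr
        exact exp_neg_div_le_one_sub_pow_mul (by lia) (by lia) hs₀ ht₀ hs ht
    _ = _ := by
        rw [mul_pow, pow_add, pow_add]
        ring

end FallingFactorials

section Occupancy

variable {α β ι κ : Type*} {S : ι → Set α} {T : κ → Set α}

/-- The event that each of the cells `S k` contains exactly one of the points `ω j`. -/
def singlyOccupied (S : ι → Set α) : Set (β → α) :=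
  {ω | ∀ k, ∃! j, ω j ∈ S k}

/-- The event that each cell `S k` contains the point of index `f k` while all the points whose
index is not in the range of `f` avoid every cell. For disjoint cells, these boxes partition
`singlyOccupied S`. -/
def assignmentBox (S : ι → Set α) (f : ι ↪ β) : Set (β → α) :=
  Set.pi univ (Function.extend f S fun _ => (⋃ k, S k)ᶜ)

lemma singlyOccupied_sumElim :
    (singlyOccupied (Sum.elim S T) : Set (β → α)) = singlyOccupied S ∩ singlyOccupied T := by
  ext ω
  simp [singlyOccupied]

lemma mem_assignmentBox {f : ι ↪ β} {ω : β → α} :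
    ω ∈ assignmentBox S f ↔ (∀ k, ω (f k) ∈ S k) ∧ ∀ j ∉ range f, ∀ k, ω j ∉ S k := by
  simp only [assignmentBox, mem_univ_pi]
  refine ⟨fun h => ⟨fun k => ?_, fun j hj => ?_⟩, fun ⟨hrange, houtside⟩ j => ?_⟩
  · simpa [f.injective.extend_apply] using h (f k)
  · simpa [Function.extend_apply' _ _ _ hj] using h j
  · by_cases hj : j ∈ range f
    · obtain ⟨k, rfl⟩ := hj
      simpa [f.injective.extend_apply] using hrange k
    · simpa [Function.extend_apply' _ _ _ hj] using houtside j hj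

lemma assignmentBox_subset_singlyOccupied (hd : Pairwise (Function.onFun Disjoint S))
    (f : ι ↪ β) : assignmentBox S f ⊆ singlyOccupied S := by
  intro ω hω k
  obtain ⟨hrange, houtside⟩ := mem_assignmentBox.1 hω
  refine ⟨f k, hrange k, fun j hj => ?_⟩
  obtain ⟨l, rfl⟩ : j ∈ range f := by_contra fun hjf => houtside j hjf k hj
  congr 1
  exact hd.eq (not_disjoint_iff.2 ⟨_, hrange l, hj⟩)

lemma singlyOccupied_eq_iUnion_assignmentBox (hd : Pairwise (Function.onFun Disjoint S)) :
    singlyOccupied S = ⋃ f : ι ↪ β, assignmentBox S f := by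
  refine Subset.antisymm (fun ω hω => ?_)
    (iUnion_subset fun f => assignmentBox_subset_singlyOccupied hd f)
  choose f hf hunique using hω
  have hinj : Function.Injective f := fun k l hkl =>
    hd.eq (not_disjoint_iff.2 ⟨_, hf k, hkl ▸ hf l⟩)
  exact mem_iUnion.2 ⟨⟨f, hinj⟩, mem_assignmentBox.2
    ⟨hf, fun j hj k hjk => hj ⟨k, (hunique k j hjk).symm⟩⟩⟩

lemma pairwise_disjoint_assignmentBox (hd : Pairwise (Function.onFun Disjoint S)) :
    Pairwise (Function.onFun Disjoint fun f : ι ↪ β => assignmentBox S f) := by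
  refine fun f g hfg => Set.disjoint_left.2 fun ω hf hg => hfg ?_
  ext1 k
  exact (assignmentBox_subset_singlyOccupied hd f hf k).unique
    ((mem_assignmentBox.1 hf).1 k) ((mem_assignmentBox.1 hg).1 k)

variable [MeasurableSpace α]

lemma measurableSet_assignmentBox [Countable β] [Countable ι] (hm : ∀ k, MeasurableSet (S k))
    (f : ι ↪ β) : MeasurableSet (assignmentBox S f) := by
  refine MeasurableSet.univ_pi fun j => ?_
  by_cases hj : j ∈ range f
  · obtain ⟨k, rfl⟩ := hj
    simpa [f.injective.extend_apply] using hm k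
  · rw [Function.extend_apply' _ _ _ hj]
    exact (MeasurableSet.iUnion hm).compl

lemma measurableSet_singlyOccupied [Finite β] [Finite ι] (hm : ∀ k, MeasurableSet (S k))
    (hd : Pairwise (Function.onFun Disjoint S)) :
    MeasurableSet (singlyOccupied S : Set (β → α)) := by
  rw [singlyOccupied_eq_iUnion_assignmentBox hd]
  exact MeasurableSet.iUnion fun f => measurableSet_assignmentBox hm f

variable [Fintype β] {μ : Measure α} {q : ℝ}

lemma singlyOccupied_ae_eq [Countable ι] [SigmaFinite μ] {S T : ι → Set α}
    (h : ∀ k, S k =ᵐ[μ] T k) :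
    (singlyOccupied S : Set (β → α)) =ᵐ[Measure.pi fun _ => μ] singlyOccupied T := by
  have hmem : ∀ᵐ ω ∂Measure.pi fun _ : β => μ, ∀ j k, ω j ∈ S k ↔ ω j ∈ T k :=
    ae_all_iff.2 fun j => ae_all_iff.2 fun k =>
      (Measure.quasiMeasurePreserving_eval (fun _ : β => μ) j).ae (Filter.eventuallyEq_set.1 (h k))
  filter_upwards [hmem] with ω hω
  exact propext (forall_congr' fun k => existsUnique_congr fun j => hω j k)

lemma four_mul_card_mul_sum_measureReal_le [Fintype ι] (hqS : ∀ k, μ.real (S k) ≤ q)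
    (hq : 4 * Fintype.card β * q ≤ 1) :
    4 * Fintype.card β * ∑ k, μ.real (S k) ≤ Fintype.card ι := by
  calc 4 * Fintype.card β * ∑ k, μ.real (S k) ≤ ∑ _k : ι, 4 * Fintype.card β * q := by
        rw [Finset.mul_sum]
        gcongr with k
        exact hqS k
    _ ≤ ∑ _k : ι, 1 := by gcongr
    _ = Fintype.card ι := by simp

variable [IsProbabilityMeasure μ]

lemma sum_measureReal_le_one [Fintype ι] (hm : ∀ k, MeasurableSet (S k))
    (hd : Pairwise (Function.onFun Disjoint S)) : ∑ k, μ.real (S k) ≤ 1 :=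
  (measureReal_iUnion_fintype hd hm).ge.trans measureReal_le_one

lemma measureReal_assignmentBox [Fintype ι] (hm : ∀ k, MeasurableSet (S k))
    (hd : Pairwise (Function.onFun Disjoint S)) (f : ι ↪ β) :
    (Measure.pi fun _ : β => μ).real (assignmentBox S f) =
      (∏ k, μ.real (S k)) * (1 - ∑ k, μ.real (S k)) ^ (Fintype.card β - Fintype.card ι) := by
  classical
  have hcompl : μ.real (⋃ k, S k)ᶜ = 1 - ∑ k, μ.real (S k) := by
    rw [probReal_compl_eq_one_sub (MeasurableSet.iUnion hm), measureReal_iUnion_fintype hd hm]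
  have hrange : ∏ j ∈ Finset.univ.map f,
      μ.real (Function.extend f S (fun _ => (⋃ k, S k)ᶜ) j) = ∏ k, μ.real (S k) := by
    simp [Finset.prod_map, f.injective.extend_apply]
  have houtside : ∏ j ∈ (Finset.univ.map f)ᶜ,
      μ.real (Function.extend f S (fun _ => (⋃ k, S k)ᶜ) j) =
        (1 - ∑ k, μ.real (S k)) ^ (Fintype.card β - Fintype.card ι) := by
    rw [Finset.prod_eq_pow_card fun j hj => ?_, Finset.card_compl, Finset.card_map,
      Finset.card_univ]
    rw [Function.extend_apply' _ _ _ (by simpa using hj), hcompl]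
  rw [← hrange, ← houtside, Finset.prod_mul_prod_compl, measureReal_def, assignmentBox,
    Measure.pi_pi, ENNReal.toReal_prod]
  rfl

lemma measureReal_singlyOccupied [Fintype ι] (hm : ∀ k, MeasurableSet (S k))
    (hd : Pairwise (Function.onFun Disjoint S)) :
    (Measure.pi fun _ : β => μ).real (singlyOccupied S) =
      (Fintype.card β).descFactorial (Fintype.card ι) * ((∏ k, μ.real (S k)) *
        (1 - ∑ k, μ.real (S k)) ^ (Fintype.card β - Fintype.card ι)) := by
  classical
  rw [singlyOccupied_eq_iUnion_assignmentBox hd, measureReal_iUnion_fintype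
    (pairwise_disjoint_assignmentBox hd) fun f => measurableSet_assignmentBox hm f]
  simp [measureReal_assignmentBox hm hd, Fintype.card_embedding_eq]

lemma measureReal_singlyOccupied_le [Fintype ι] (hm : ∀ k, MeasurableSet (S k))
    (hd : Pairwise (Function.onFun Disjoint S)) (hq : ∀ k, μ.real (S k) ≤ q) :
    (Measure.pi fun _ : β => μ).real (singlyOccupied S) ≤
      (Fintype.card β * q) ^ Fintype.card ι := by
  have hprod : ∏ k, μ.real (S k) ≤ q ^ Fintype.card ι :=
    (Finset.prod_le_prod (fun k _ => measureReal_nonneg) fun k _ => hq k).trans_eq (by simp)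
  have hprod₀ : 0 ≤ ∏ k, μ.real (S k) := Finset.prod_nonneg fun k _ => measureReal_nonneg
  have hempty : (1 - ∑ k, μ.real (S k)) ^ (Fintype.card β - Fintype.card ι) ≤ 1 :=
    pow_le_one₀ (sub_nonneg.2 (sum_measureReal_le_one hm hd))
      (sub_le_self _ (Finset.sum_nonneg fun k _ => measureReal_nonneg))
  rw [measureReal_singlyOccupied hm hd, mul_pow]
  gcongr
  · exact mul_nonneg hprod₀ (pow_nonneg (sub_nonneg.2 (sum_measureReal_le_one hm hd)) _)
  · exact_mod_cast Nat.descFactorial_le_pow _ _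
  · exact (mul_le_of_le_one_right hprod₀ hempty).trans hprod

lemma measureReal_singlyOccupied_inter_le [Finite ι] [Finite κ] (hmS : ∀ k, MeasurableSet (S k))
    (hmT : ∀ l, MeasurableSet (T l)) (hd : Pairwise (Function.onFun Disjoint (Sum.elim S T)))
    (hqS : ∀ k, μ.real (S k) ≤ q) (hqT : ∀ l, μ.real (T l) ≤ q)
    (hq : 4 * Fintype.card β * q ≤ 1) :
    (Measure.pi fun _ : β => μ).real (singlyOccupied S ∩ singlyOccupied T) ≤
      (Measure.pi fun _ : β => μ).real (singlyOccupied S) *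
        (Measure.pi fun _ : β => μ).real (singlyOccupied T) := by
  cases nonempty_fintype ι
  cases nonempty_fintype κ
  have hdS : Pairwise (Function.onFun Disjoint S) := fun k k' h => hd (Sum.inl_injective.ne h)
  have hdT : Pairwise (Function.onFun Disjoint T) := fun l l' h => hd (Sum.inr_injective.ne h)
  have hmST : ∀ k, MeasurableSet (Sum.elim S T k) := Sum.forall.2 ⟨hmS, hmT⟩
  have hone := sum_measureReal_le_one (μ := μ) hmST hd
  rw [← singlyOccupied_sumElim, measureReal_singlyOccupied hmST hd]
  by_cases hcard : Fintype.card ι + Fintype.card κ ≤ Fintype.card β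
  · rw [measureReal_singlyOccupied hmS hdS, measureReal_singlyOccupied hmT hdT]
    simp only [Fintype.card_sum, Fintype.sum_sum_type, Fintype.prod_sum_type, Sum.elim_inl,
      Sum.elim_inr] at hone ⊢
    have hprod : 0 ≤ (∏ k, μ.real (S k)) * ∏ l, μ.real (T l) :=
      mul_nonneg (Finset.prod_nonneg fun k _ => measureReal_nonneg)
        (Finset.prod_nonneg fun l _ => measureReal_nonneg)
    have hfactor := descFactorial_add_mul_one_sub_pow_le hcard
      (Finset.sum_nonneg fun k _ => measureReal_nonneg)
      (Finset.sum_nonneg fun l _ => measureReal_nonneg) hone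
      (four_mul_card_mul_sum_measureReal_le hqS hq) (four_mul_card_mul_sum_measureReal_le hqT hq)
    linear_combination (mul_le_mul_of_nonneg_left hfactor hprod)
  · rw [Fintype.card_sum, Nat.descFactorial_eq_zero_iff_lt.2 (not_le.1 hcard), Nat.cast_zero,
      zero_mul]
    positivity

lemma variance_sum_singlyOccupied_le [Fintype ι] [Fintype κ] {S : ι → κ → Set α}
    (hm : ∀ i k, MeasurableSet (S i k))
    (hd : Pairwise (Function.onFun Disjoint (Function.uncurry S)))
    (hqS : ∀ i k, μ.real (S i k) ≤ q) (hq : 4 * Fintype.card β * q ≤ 1) :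
    ProbabilityTheory.variance
      (fun ω => ∑ i, (singlyOccupied (S i)).indicator (1 : (β → α) → ℝ) ω)
      (Measure.pi fun _ : β => μ) ≤
      Fintype.card ι * (Fintype.card β * q) ^ Fintype.card κ := by
  have hd' : ∀ i, Pairwise (Function.onFun Disjoint (S i)) := fun i k l hkl =>
    hd (i := (i, k)) (j := (i, l)) fun h => hkl (Prod.mk.inj h).2
  refine (variance_sum_indicator_one_le (fun i => measurableSet_singlyOccupied (hm i) (hd' i))
    fun i j hij => ?_).trans ?_
  · refine measureReal_singlyOccupied_inter_le (hm i) (hm j) ?_ (hqS i) (hqS j) hq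
    have hinj : Function.Injective (Sum.elim (Prod.mk i) (Prod.mk j) : κ ⊕ κ → ι × κ) :=
      (Prod.mk_right_injective i).sumElim (Prod.mk_right_injective j)
        fun k l h => hij (Prod.mk.inj h).1
    convert hd.comp_of_injective hinj using 2
    ext k
    cases k <;> rfl
  · calc _ ≤ ∑ _i : ι, (Fintype.card β * q) ^ Fintype.card κ :=
          Finset.sum_le_sum fun i _ => measureReal_singlyOccupied_le (hm i) (hd' i) (hqS i)
      _ = _ := by simp

end Occupancy

section PolarCoordinates

variable (o : Plane)

/-- The polar parametrization of the plane with pole `o`, as a map of the pair `(r, θ)`. -/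
def polarMap (x : ℝ × ℝ) : Plane := polarPt o x.1 x.2

/-- The half-open sector of points with polar coordinates `0 < r ≤ d` and `a ≤ θ < c` relative
to `o`. -/
def sector (d a c : ℝ) : Set Plane := polarMap o '' (Ioc 0 d ×ˢ Ico a c)

/-- The sector of points with polar coordinates `0 < r ≤ d` and `a ≤ θ ≤ c` relative to `o`. -/
def closedSector (d a c : ℝ) : Set Plane := polarMap o '' (Ioc 0 d ×ˢ Icc a c)

lemma polarMap_eq_add_toLp (x : ℝ × ℝ) :
    polarMap o x = o + WithLp.toLp 2 (MeasurableEquiv.finTwoArrow.symm (polarCoord.symm x)) := by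
  ext i
  fin_cases i <;> simp [polarMap, polarPt, pt, polarCoord_symm_apply]

lemma continuous_polarMap : Continuous (polarMap o) := by
  change Continuous fun x : ℝ × ℝ => o + x.1 • WithLp.toLp 2 ![cos x.2, sin x.2]
  fun_prop

lemma volume_image_polarMap (A : Set (ℝ × ℝ)) :
    volume (polarMap o '' A) = volume (polarCoord.symm '' A) := by
  let cartesian : ℝ × ℝ ≃ᵐ Plane := MeasurableEquiv.finTwoArrow.symm.trans
    ((MeasurableEquiv.toLp 2 (Fin 2 → ℝ)).trans (MeasurableEquiv.addLeft o))
  have hcartesian : MeasurePreserving cartesian :=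
    ((measurePreserving_add_left volume o).comp (PiLp.volume_preserving_toLp (Fin 2))).comp
      ((volume_preserving_finTwoArrow ℝ).symm _)
  have himage : polarMap o '' A = cartesian '' (polarCoord.symm '' A) := by
    rw [image_image]
    exact image_congr fun x _ => polarMap_eq_add_toLp o x
  rw [himage, MeasurableEquiv.image_eq_preimage_symm,
    (hcartesian.symm cartesian).measure_preimage_equiv]

lemma injOn_polarMap (a : ℝ) : InjOn (polarMap o) (Ioi 0 ×ˢ Ico a (a + 2 * π)) := by
  rintro ⟨r, θ⟩ ⟨hr, hθ⟩ ⟨s, φ⟩ ⟨hs, hφ⟩ h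
  obtain ⟨hcos, hsin⟩ : r * cos θ = s * cos φ ∧ r * sin θ = s * sin φ := by
    simpa [polarMap, polarPt, pt, PiLp.ext_iff, Fin.forall_fin_two] using h
  obtain rfl : r = s := (sq_eq_sq₀ (le_of_lt hr) (le_of_lt hs)).1 <| by
    linear_combination s ^ 2 * sin_sq_add_cos_sq φ - r ^ 2 * sin_sq_add_cos_sq θ +
      (r * cos θ + s * cos φ) * hcos + (r * sin θ + s * sin φ) * hsin
  have hangle : (θ : Real.Angle) = φ := Real.Angle.cos_sin_inj
    (mul_left_cancel₀ (ne_of_gt hr) hcos) (mul_left_cancel₀ (ne_of_gt hr) hsin)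
  have : Fact (0 < 2 * π) := ⟨two_pi_pos⟩
  exact Prod.ext rfl ((AddCircle.coe_eq_coe_iff_of_mem_Ico hθ hφ).1 hangle)

lemma measurableSet_sector {a c : ℝ} (hac : c ≤ a + 2 * π) (d : ℝ) :
    MeasurableSet (sector o d a c) :=
  (measurableSet_Ioc.prod measurableSet_Ico).image_of_continuousOn_injOn
    (continuous_polarMap o).continuousOn
    ((injOn_polarMap o a).mono (prod_mono Ioc_subset_Ioi_self (Ico_subset_Ico_right hac)))

lemma lintegral_Ioc_ofReal_abs {d : ℝ} (hd : 0 ≤ d) :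
    ∫⁻ r in Ioc 0 d, ENNReal.ofReal |r| = ENNReal.ofReal (d ^ 2 / 2) := by
  rw [setLIntegral_congr_fun measurableSet_Ioc fun r hr => by rw [abs_of_pos hr.1],
    ← ofReal_integral_eq_lintegral_ofReal, ← intervalIntegral.integral_of_le hd, integral_id]
  · simp
  · exact continuous_id.integrableOn_Ioc
  · exact ae_restrict_of_forall_mem measurableSet_Ioc fun r hr => hr.1.le

lemma volume_closedSector_le {d : ℝ} (hd : 0 ≤ d) (a c : ℝ) :
    volume (closedSector o d a c) ≤ ENNReal.ofReal (d ^ 2 / 2 * (c - a)) := by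
  calc volume (closedSector o d a c)
      ≤ ∫⁻ x in Ioc 0 d ×ˢ Icc a c, ENNReal.ofReal |x.1| := by
        rw [closedSector, volume_image_polarMap]
        simpa only [det_fderivPolarCoordSymm] using
          addHaar_image_le_lintegral_abs_det_fderiv volume
            (measurableSet_Ioc.prod measurableSet_Icc)
            fun x _ => (hasFDerivAt_polarCoord_symm x).hasFDerivWithinAt
    _ = (∫⁻ r in Ioc 0 d, ENNReal.ofReal |r|) * volume (Icc a c) := by
        rw [Measure.volume_eq_prod, setLIntegral_prod _ (by fun_prop)]
        simp [lintegral_mul_const']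
    _ = ENNReal.ofReal (d ^ 2 / 2 * (c - a)) := by
        rw [lintegral_Ioc_ofReal_abs hd, Real.volume_Icc, ENNReal.ofReal_mul (by positivity)]

lemma sector_ae_eq_closedSector {d : ℝ} (hd : 0 ≤ d) (a c : ℝ) :
    sector o d a c =ᵐ[volume] closedSector o d a c := by
  have hray : volume (closedSector o d c c) = 0 :=
    nonpos_iff_eq_zero.1 ((volume_closedSector_le o hd c c).trans_eq (by simp))
  refine ae_eq_set.2 ⟨?_, measure_mono_null ?_ hray⟩
  · have hsubset : sector o d a c ⊆ closedSector o d a c :=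
      image_mono (prod_mono_right Ico_subset_Icc_self)
    rw [sdiff_eq_empty.2 hsubset, measure_empty]
  · rintro _ ⟨⟨⟨r, θ⟩, ⟨hr, haθ, hθc⟩, rfl⟩, hnot⟩
    refine ⟨(r, θ), ⟨hr, not_lt.1 fun hlt => hnot ⟨(r, θ), ⟨hr, haθ, hlt⟩, rfl⟩, hθc⟩, rfl⟩

lemma disjoint_sector (d : ℝ) {a c a' c' : ℝ} (hca' : c ≤ a') (hc' : c' ≤ a + 2 * π) :
    Disjoint (sector o d a c) (sector o d a' c') := by
  refine Set.disjoint_left.2 ?_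
  rintro _ ⟨⟨r, θ⟩, ⟨hr, haθ, hθc⟩, rfl⟩ ⟨⟨s, φ⟩, ⟨hs, haφ, hφc⟩, heq⟩
  have hθφ : φ = θ := congrArg Prod.snd <| injOn_polarMap o a
    ⟨hs.1, ((haθ.trans hθc.le).trans hca').trans haφ, hφc.trans_le hc'⟩
    ⟨hr.1, haθ, ((hθc.trans_le hca').trans_le haφ).trans (hφc.trans_le hc')⟩ heq
  exact (hθφ ▸ hca'.trans haφ).not_gt hθc

end PolarCoordinates

section Cells

/-- The angle at which the `k`-th cell of the subdivision of `D_δ(o)` begins. -/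
def cellAngle (b : ℝ) (k : ℕ) : ℝ := (k - 1 / 2) * θb b

/-- The `k`-th of the `2L` half-open sectors of angle `θ_b` that partition the punctured disk
`D_δ(o)`. Up to boundary rays, these are `Q_0, …, Q_{L-1}, R_0, …, R_{L-1}`, in this order. -/
def cell (o : Plane) (b : ℝ) (k : ℕ) : Set Plane :=
  sector o (δ b) (cellAngle b k) (cellAngle b (k + 1))

/-- The pair of opposite cells that are almost everywhere equal to `Q_i` and `R_i`. -/
def oppositeCells (o : Plane) (b : ℝ) (i : Fin (L b)) (k : Fin 2) : Set Plane :=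
  cell o b (i + L b * k)

variable (o : Plane) {b : ℝ}

lemma δ_nonneg (b : ℕ) : 0 ≤ δ b := by
  unfold δ
  positivity

lemma θb_nonneg (b : ℝ) : 0 ≤ θb b := by
  unfold θb
  positivity

lemma L_mul_θb (hL : L b ≠ 0) : L b * θb b = π :=
  mul_div_cancel₀ π (Nat.cast_ne_zero.2 hL)

lemma cellAngle_succ (b : ℝ) (k : ℕ) : cellAngle b (k + 1) = (k + 1 / 2) * θb b := by
  simp only [cellAngle]
  push_cast
  ring

lemma cellAngle_succ_sub (b : ℝ) (k : ℕ) : cellAngle b (k + 1) - cellAngle b k = θb b := by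
  rw [cellAngle_succ, cellAngle]
  ring

lemma monotone_cellAngle (b : ℝ) : Monotone (cellAngle b) :=
  monotone_nat_of_le_succ fun k => sub_nonneg.1 ((cellAngle_succ_sub b k).symm ▸ θb_nonneg b)

lemma cellAngle_add_L (hL : L b ≠ 0) (k : ℕ) : cellAngle b (k + L b) = cellAngle b k + π := by
  simp only [cellAngle, ← L_mul_θb hL]
  push_cast
  ring

lemma cellAngle_le_add_two_pi (hL : L b ≠ 0) {k l : ℕ} (hl : l ≤ k + 2 * L b) :
    cellAngle b l ≤ cellAngle b k + 2 * π :=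
  calc cellAngle b l ≤ cellAngle b (k + L b + L b) := monotone_cellAngle b (by lia)
    _ = cellAngle b k + 2 * π := by rw [cellAngle_add_L hL, cellAngle_add_L hL]; ring

lemma measurableSet_cell (hL : L b ≠ 0) (k : ℕ) : MeasurableSet (cell o b k) :=
  measurableSet_sector o (cellAngle_le_add_two_pi hL (by lia)) _

lemma pairwise_disjoint_cell (hL : L b ≠ 0) :
    Pairwise (Function.onFun Disjoint fun k : Fin (2 * L b) => cell o b k) :=
  (pairwise_disjoint_on _).2 fun _ l hkl => disjoint_sector o _
    (monotone_cellAngle b (Nat.succ_le_of_lt hkl)) (cellAngle_le_add_two_pi hL (by lia))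

lemma pairwise_disjoint_oppositeCells (hL : L b ≠ 0) :
    Pairwise (Function.onFun Disjoint (Function.uncurry (oppositeCells o b))) :=
  fun x y hxy => pairwise_disjoint_cell o hL
    (i := finProdFinEquiv x.swap) (j := finProdFinEquiv y.swap)
    fun h => hxy (Prod.swap_injective (finProdFinEquiv.injective h))

lemma volume_cell_le (b k : ℕ) :
    volume (cell o b k) ≤ ENNReal.ofReal (δ b ^ 2 / 2 * θb b) := by
  rw [cell, measure_congr (sector_ae_eq_closedSector o (δ_nonneg b) _ _),
    ← cellAngle_succ_sub b k]
  exact volume_closedSector_le o (δ_nonneg b) _ _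

lemma Qsector_eq_closedSector (b : ℝ) (i : ℕ) :
    Qsector o b i = closedSector o (δ b) (cellAngle b i) (cellAngle b (i + 1)) := by
  rw [cellAngle_succ, cellAngle]
  ext p
  constructor
  · rintro ⟨r, θ, hr, hrδ, haθ, hθc, rfl⟩
    exact ⟨(r, θ), ⟨⟨hr, hrδ⟩, haθ, hθc⟩, rfl⟩
  · rintro ⟨⟨r, θ⟩, ⟨⟨hr, hrδ⟩, haθ, hθc⟩, rfl⟩
    exact ⟨r, θ, hr, hrδ, haθ, hθc, rfl⟩

lemma Rsector_eq_closedSector (hL : L b ≠ 0) (i : ℕ) :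
    Rsector o b i = closedSector o (δ b) (cellAngle b (i + L b)) (cellAngle b (i + L b + 1)) := by
  rw [show i + L b + 1 = i + 1 + L b by ring, cellAngle_add_L hL, cellAngle_add_L hL,
    cellAngle_succ, cellAngle]
  ext p
  constructor
  · rintro ⟨r, θ, hr, hrδ, haθ, hθc, rfl⟩
    exact ⟨(r, θ), ⟨⟨hr, hrδ⟩, le_sub_iff_add_le.1 haθ, sub_le_iff_le_add.1 hθc⟩, rfl⟩
  · rintro ⟨⟨r, θ⟩, ⟨⟨hr, hrδ⟩, haθ, hθc⟩, rfl⟩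
    exact ⟨r, θ, hr, hrδ, le_sub_iff_add_le.2 haθ, sub_le_iff_le_add.2 hθc, rfl⟩

lemma oppositeCells_zero_ae_eq_Qsector {b : ℕ} (i : Fin (L b)) :
    oppositeCells o b i 0 =ᵐ[volume] Qsector o b i := by
  rw [Qsector_eq_closedSector]
  exact sector_ae_eq_closedSector o (δ_nonneg b) _ _

lemma oppositeCells_one_ae_eq_Rsector {b : ℕ} (i : Fin (L b)) :
    oppositeCells o b i 1 =ᵐ[volume] Rsector o b i := by
  have hcell : oppositeCells o b i 1 = cell o b (i + L b) := by simp [oppositeCells]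
  rw [hcell, Rsector_eq_closedSector o i.pos.ne']
  exact sector_ae_eq_closedSector o (δ_nonneg b) _ _

end Cells

section UniformPoints

variable {o : Plane} {b : ℕ}

lemma closedBall_subset_quad {p : Plane} {r : ℝ} (h₀ : r ≤ p 0) (h₁ : r ≤ p 1) :
    Metric.closedBall p r ⊆ quad := by
  intro x hx
  have hcoord : ∀ i, |x i - p i| ≤ r := fun i =>
    (PiLp.norm_apply_le (x - p) i).trans (mem_closedBall_iff_norm.1 hx)
  exact ⟨by linarith [(abs_le.1 (hcoord 0)).1], by linarith [(abs_le.1 (hcoord 1)).1]⟩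

lemma volume_Dhat_ne_top (o : Plane) : volume (Dhat o) ≠ ⊤ :=
  measure_ne_top_of_subset inter_subset_left measure_closedBall_lt_top.ne

lemma pi_div_sixteen_le_volume_real_Dhat (ho : o ∈ quad) : π / 16 ≤ volume.real (Dhat o) := by
  have hdisk : Metric.closedBall (o + pt (1 / 2) (1 / 2)) (1 / 4) ⊆ D o 1 := by
    refine Metric.closedBall_subset_closedBall' ?_
    have hnorm : ‖pt (1 / 2) (1 / 2)‖ ≤ 3 / 4 := by
      rw [EuclideanSpace.norm_eq, Real.sqrt_le_left (by norm_num)]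
      norm_num [pt]
    rw [dist_self_add_left]
    linarith
  have hquad : Metric.closedBall (o + pt (1 / 2) (1 / 2)) (1 / 4) ⊆ quad := by
    have hcoord : ∀ i, (o + pt (1 / 2) (1 / 2)) i = o i + 1 / 2 :=
      Fin.forall_fin_two.2 ⟨rfl, rfl⟩
    apply closedBall_subset_quad <;> rw [hcoord]
    · linarith [ho.1]
    · linarith [ho.2]
  calc π / 16 = volume.real (Metric.closedBall (o + pt (1 / 2) (1 / 2)) (1 / 4)) := by
        rw [measureReal_def, EuclideanSpace.volume_closedBall_fin_two, ENNReal.toReal_mul,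
          ENNReal.toReal_pow, ENNReal.toReal_ofReal (by norm_num),
          ENNReal.toReal_ofReal Real.pi_pos.le]
        ring
    _ ≤ volume.real (Dhat o) :=
        measureReal_mono (subset_inter hdisk hquad) (volume_Dhat_ne_top o)

lemma isProbabilityMeasure_unif_Dhat (ho : o ∈ quad) : IsProbabilityMeasure (unif (Dhat o)) := by
  refine ProbabilityTheory.cond_isProbabilityMeasure_of_finite (fun h => ?_) (volume_Dhat_ne_top o)
  have harea := pi_div_sixteen_le_volume_real_Dhat ho
  rw [measureReal_def, h, ENNReal.toReal_zero] at harea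
  linarith [Real.pi_pos]

lemma unif_real_le {S T : Set Plane} (hS : volume S ≠ ⊤) :
    (unif T).real S ≤ volume.real S / volume.real T := by
  rw [unif, measureReal_ennreal_smul_apply, ENNReal.toReal_inv, div_eq_inv_mul]
  exact mul_le_mul_of_nonneg_left (ENNReal.toReal_mono hS (Measure.restrict_apply_le _ _))
    (inv_nonneg.2 measureReal_nonneg)

lemma unif_real_cell_le (ho : o ∈ quad) (b k : ℕ) :
    (unif (Dhat o)).real (cell o b k) ≤ 8 * δ b ^ 2 / L b := by
  have hθ := θb_nonneg b
  have hcell := volume_cell_le o b k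
  calc (unif (Dhat o)).real (cell o b k) ≤ volume.real (cell o b k) / volume.real (Dhat o) :=
        unif_real_le (ne_top_of_le_ne_top ENNReal.ofReal_ne_top hcell)
    _ ≤ δ b ^ 2 / 2 * θb b / (π / 16) := by
        gcongr
        · exact ENNReal.toReal_le_of_le_ofReal (by positivity) hcell
        · exact pi_div_sixteen_le_volume_real_Dhat ho
    _ = 8 * δ b ^ 2 / L b := by
        rw [θb]
        field_simp
        ring

lemma countIn_eq_one_iff {S : Set Plane} {ω : Fin b → Plane} :
    countIn S ω = 1 ↔ ∃! j, ω j ∈ S := by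
  rw [countIn, Set.ncard_eq_one]
  exact exists_congr fun j => Set.eq_singleton_iff_unique_mem

lemma tau_eq_sum_indicator (o : Plane) (ω : Fin b → Plane) :
    (tau o b ω : ℝ) = ∑ i : Fin (L b),
      (singlyOccupied ![Qsector o b i, Rsector o b i]).indicator (1 : (Fin b → Plane) → ℝ) ω := by
  classical
  rw [tau, Finset.sum_range]
  push_cast
  refine Finset.sum_congr rfl fun i _ => ?_
  simp only [indicator_apply, singlyOccupied, mem_ofPred_eq, Fin.forall_fin_two,
    Matrix.cons_val_zero, Matrix.cons_val_one, countIn_eq_one_iff, Pi.one_apply]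

lemma tau_ae_eq_sum_indicator (ho : o ∈ quad) :
    (fun ω => (tau o b ω : ℝ)) =ᵐ[ptsMeasure o b] fun ω => ∑ i : Fin (L b),
      (singlyOccupied (oppositeCells o b i)).indicator (1 : (Fin b → Plane) → ℝ) ω := by
  have := isProbabilityMeasure_unif_Dhat ho
  have hcells : ∀ (i : Fin (L b)) k,
      oppositeCells o b i k =ᵐ[unif (Dhat o)] ![Qsector o b i, Rsector o b i] k := fun i =>
    Fin.forall_fin_two.2
      ⟨ProbabilityTheory.cond_absolutelyContinuous.ae_eq (oppositeCells_zero_ae_eq_Qsector o i),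
        ProbabilityTheory.cond_absolutelyContinuous.ae_eq (oppositeCells_one_ae_eq_Rsector o i)⟩
  have hindicator : ∀ᵐ ω ∂ptsMeasure o b, ∀ i : Fin (L b),
      (singlyOccupied (oppositeCells o b i)).indicator (1 : (Fin b → Plane) → ℝ) ω =
        (singlyOccupied ![Qsector o b i, Rsector o b i]).indicator 1 ω :=
    ae_all_iff.2 fun i => indicator_ae_eq_of_ae_eq_set (singlyOccupied_ae_eq (hcells i))
  filter_upwards [hindicator] with ω hω
  rw [tau_eq_sum_indicator, Finset.sum_congr rfl fun i _ => (hω i).symm]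

lemma variance_tau_le_of_cell_bound (ho : o ∈ quad) (hL : L b ≠ 0)
    (hq : 4 * b * (8 * δ b ^ 2 / L b) ≤ 1) :
    ProbabilityTheory.variance (fun ω => (tau o b ω : ℝ)) (ptsMeasure o b) ≤
      L b * (b * (8 * δ b ^ 2 / L b)) ^ 2 := by
  have := isProbabilityMeasure_unif_Dhat ho
  rw [ProbabilityTheory.variance_congr (tau_ae_eq_sum_indicator ho)]
  have hvar := variance_sum_singlyOccupied_le (β := Fin b) (μ := unif (Dhat o))
    (S := oppositeCells o b) (fun i k => measurableSet_cell o hL _)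
    (pairwise_disjoint_oppositeCells o hL) (fun i k => unif_real_cell_le ho b _)
    (by simpa only [Fintype.card_fin] using hq)
  simpa only [ptsMeasure, Fintype.card_fin] using hvar

end UniformPoints

section Asymptotics

variable {b : ℕ}

lemma four_le_log (hb : 81 ≤ b) : 4 ≤ log b := by
  rw [Real.le_log_iff_exp_le (by positivity)]
  calc exp 4 = exp 1 ^ 4 := by rw [← exp_nat_mul]; norm_num
    _ ≤ 3 ^ 4 := by
      gcongr
      exact exp_one_lt_three.le
    _ ≤ b := by norm_num; exact_mod_cast hb

lemma L_le (b : ℕ) : (L b : ℝ) ≤ (b : ℝ) ^ (1/3 : ℝ) * log b ^ 2 :=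
  Nat.floor_le (by positivity)

lemma half_le_L (hb : 81 ≤ b) : (b : ℝ) ^ (1/3 : ℝ) * log b ^ 2 / 2 ≤ L b := by
  have hlog := four_le_log hb
  have hone : 1 ≤ (b : ℝ) ^ (1/3 : ℝ) :=
    Real.one_le_rpow (by exact_mod_cast (by lia : 1 ≤ b)) (by norm_num)
  exact (Nat.div_two_lt_floor (by nlinarith)).le

lemma L_ne_zero (hb : 81 ≤ b) : L b ≠ 0 := by
  have hlog := four_le_log hb
  have : (0 : ℝ) < L b := (half_le_L hb).trans_lt' (by positivity)
  exact_mod_cast this.ne'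

lemma mul_cell_bound_le (hb : 81 ≤ b) : b * (8 * δ b ^ 2 / L b) ≤ 16 / log b ^ 4 := by
  have hlog := four_le_log hb
  have hcube : ((b : ℝ) ^ (1/3 : ℝ)) ^ 3 = b := by
    rw [← rpow_natCast, ← rpow_mul (by positivity)]
    norm_num
  calc b * (8 * δ b ^ 2 / L b)
      ≤ b * (8 * δ b ^ 2 / ((b : ℝ) ^ (1/3 : ℝ) * log b ^ 2 / 2)) := by
        gcongr
        exact half_le_L hb
    _ = 16 / log b ^ 4 := by
        rw [δ]
        nth_rewrite 1 [← hcube]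
        field_simp
        norm_num

lemma L_mul_sq_le (hb : 81 ≤ b) :
    L b * (b * (8 * δ b ^ 2 / L b)) ^ 2 ≤ 256 * (b : ℝ) ^ (1/3 : ℝ) / log b ^ 6 := by
  have hlog := four_le_log hb
  calc L b * (b * (8 * δ b ^ 2 / L b)) ^ 2
      ≤ (b : ℝ) ^ (1/3 : ℝ) * log b ^ 2 * (16 / log b ^ 4) ^ 2 := by
        gcongr
        · exact L_le b
        · exact mul_cell_bound_le hb
    _ = 256 * (b : ℝ) ^ (1/3 : ℝ) / log b ^ 6 := by
        field_simp
        norm_num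

end Asymptotics

theorem variance_tau_general :
    ∃ C > (0 : ℝ), ∃ b₀ : ℕ, ∀ b : ℕ, b₀ ≤ b → ∀ o ∈ quad,
      ProbabilityTheory.variance (fun ω => (tau o b ω : ℝ)) (ptsMeasure o b) ≤
        C * (b : ℝ) ^ (1/3 : ℝ) / (Real.log b) ^ 6 := by
  refine ⟨256, by norm_num, 81, fun b hb o ho => ?_⟩
  have hlog := four_le_log hb
  have hq : 4 * b * (8 * δ b ^ 2 / L b) ≤ 1 :=
    calc 4 * b * (8 * δ b ^ 2 / L b) = 4 * (b * (8 * δ b ^ 2 / L b)) := by ring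
      _ ≤ 4 * (16 / log b ^ 4) := by gcongr; exact mul_cell_bound_le hb
      _ ≤ 4 * (16 / 4 ^ 4) := by gcongr
      _ ≤ 1 := by norm_num
  exact (variance_tau_le_of_cell_bound ho (L_ne_zero hb) hq).trans (L_mul_sq_le hb)

/-- There are `C > 0` and `b₀` such that for all integers `b ≥ b₀`, uniformly
over all `o ∈ ℝ₊²` with `D_δ(o) ⊆ ℝ₊²`: `Var(τ_b) ≤ C b^{1/3} / (log b)⁶`. -/
theorem variance_tau :
    ∃ C > (0 : ℝ), ∃ b₀ : ℕ, ∀ b : ℕ, b₀ ≤ b → ∀ o : Plane, o ∈ quad → D o (δ b) ⊆ quad →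
      ProbabilityTheory.variance (fun ω => (tau o b ω : ℝ)) (ptsMeasure o b) ≤
        C * (b : ℝ) ^ (1/3 : ℝ) / (Real.log b) ^ 6 := by
  obtain ⟨C, hC, b₀, hvar⟩ := variance_tau_general
  exact ⟨C, hC, b₀, fun b hb o ho _ => hvar b hb o ho⟩
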